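/- Let q, t ∈ ℂ∖{0}. Define the 2×2 complex matrices A(t,q) = [[0, 1], [−q^{−2}, 2q^{−1} − q^{−2}t^{−1}]] (the companion matrix of the q-difference equation tq f(qt) + (1−2t) f(t) + tq^{−1} f(q^{−1}t) = 0 of the 4₁ knot), A^∧(t,q) = A(qt, q^{−1})^{−1}, A^∨(t,q) = (A(t,q)^{−1})^T, P^∧(t,q) = [[1, 0], [2q^{−1} − q^{−1}t^{−1}, −q^{−2}]], and P^∨(t,q) = [[0, −q^{−1}t^{−2}], [q^{−1}t^{−2}, 0]]. Then A(t,q) = P^∧(qt,q) · A^∧(t,q) · P^∧(t,q)^{−1} and A(t,q) = P^∨(qt,q) · A^∨(t,q) · P^∨(t,q)^{−1}; in particular the q-holonomic module of the 4₁ knot is gauge equivalent to both of its duals. -/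

import Mathlib

open Matrix

/-- The companion matrix of the q-difference equation
`tq f(qt) + (1−2t) f(t) + tq^{−1} f(q^{−1}t) = 0` of the 4₁ knot. -/
noncomputable def A41 (t q : ℂ) : Matrix (Fin 2) (Fin 2) ℂ :=
  !![0, 1; -(q ^ 2)⁻¹, 2 * q⁻¹ - (q ^ 2)⁻¹ * t⁻¹]

/-- The `∧`-dual companion matrix `A^∧(t,q) = A(qt, q^{−1})^{−1}`. -/
noncomputable def A41w (t q : ℂ) : Matrix (Fin 2) (Fin 2) ℂ := (A41 (q * t) q⁻¹)⁻¹

/-- The `∨`-dual companion matrix `A^∨(t,q) = (A(t,q)^{−1})^T`. -/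
noncomputable def A41v (t q : ℂ) : Matrix (Fin 2) (Fin 2) ℂ := ((A41 t q)⁻¹)ᵀ

/-- The gauge transformation `P^∧`. -/
noncomputable def P41w (t q : ℂ) : Matrix (Fin 2) (Fin 2) ℂ :=
  !![1, 0; 2 * q⁻¹ - q⁻¹ * t⁻¹, -(q ^ 2)⁻¹]

/-- The gauge transformation `P^∨`. -/
noncomputable def P41v (t q : ℂ) : Matrix (Fin 2) (Fin 2) ℂ :=
  !![0, -(q * t ^ 2)⁻¹; (q * t ^ 2)⁻¹, 0]

/-- The q-holonomic module of the 4₁ knot is gauge equivalent to both of its duals: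
`A(t,q) = P^∧(qt,q) A^∧(t,q) P^∧(t,q)^{−1}` and
`A(t,q) = P^∨(qt,q) A^∨(t,q) P^∨(t,q)^{−1}`. -/
theorem A41_self_dual (q t : ℂ) (hq : q ≠ 0) (ht : t ≠ 0) :
    A41 t q = P41w (q * t) q * A41w t q * (P41w t q)⁻¹ ∧
    A41 t q = P41v (q * t) q * A41v t q * (P41v t q)⁻¹ := by
  have hdw : IsUnit (P41w t q).det := by
    simp [P41w, Matrix.det_fin_two, hq]
  have hdv : IsUnit (P41v t q).det := by
    simp [P41v, Matrix.det_fin_two, hq, ht]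
  have hB : A41w t q = !![2 * q⁻¹ - q⁻¹ * t⁻¹, -(q ^ 2)⁻¹; 1, 0] := by
    unfold A41w
    apply Matrix.inv_eq_right_inv
    ext i j
    fin_cases i <;> fin_cases j <;> simp [A41, Matrix.mul_apply, Fin.sum_univ_two] <;>
      field_simp <;> ring
  have hA : (A41 t q)⁻¹ = !![q ^ 2 * (2 * q⁻¹ - (q ^ 2)⁻¹ * t⁻¹), -q ^ 2; 1, 0] := by
    apply Matrix.inv_eq_right_inv
    ext i j
    fin_cases i <;> fin_cases j <;> simp [A41, Matrix.mul_apply, Fin.sum_univ_two] <;>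
      field_simp <;> ring
  constructor
  · have h : A41 t q * P41w t q = P41w (q * t) q * A41w t q := by
      rw [hB]
      ext i j
      fin_cases i <;> fin_cases j <;>
        simp [A41, P41w, Matrix.mul_apply, Fin.sum_univ_two, -mul_eq_mul_left_iff, -mul_eq_mul_right_iff] <;> field_simp <;> ring
    rw [← h, Matrix.mul_nonsing_inv_cancel_right _ _ hdw]
  · have h : A41 t q * P41v t q = P41v (q * t) q * A41v t q := by
      unfold A41v
      rw [hA]
      ext i j
      fin_cases i <;> fin_cases j <;>
        simp [A41, P41v, Matrix.mul_apply, Fin.sum_univ_two, -mul_eq_mul_left_iff, -mul_eq_mul_right_iff] <;> field_simp <;> ring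
    rw [← h, Matrix.mul_nonsing_inv_cancel_right _ _ hdv]
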